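/- Let E be a real Banach space and let g : E × ℝ → ℝ be continuous such that the map G : E × ℝ → E × ℝ defined by G(e,t) = (e, g(e,t)) is proper. Assume that no point of E × ℝ has three distinct preimages under G, and that some point of E × ℝ has two distinct preimages under G. Then there exist a continuous function τ : E → ℝ and a sign ε ∈ {+1, −1}, independent of e, such that for every e ∈ E and s ∈ ℝ: the equation G(x) = (e,s) has exactly two solutions x ∈ E × ℝ if ε·(s − τ(e)) < 0, exactly one solution if s = τ(e), and no solution if ε·(s − τ(e)) > 0. -/

import Mathlib

open Filter Topology Set

def No3 (f : ℝ → ℝ) : Prop := ∀ x y z, x < y → y < z → f x = f y → f y = f z → False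

theorem l1 (f : ℝ → ℝ) (hf : Continuous f) (ht : Tendsto f atTop atTop) (h3 : No3 f)
    (a b c : ℝ) (hac : a < c) (hcb : c < b) (hab : f a = f b) : f c < f a := by
  by_contra! h
  rcases h.eq_or_lt with h | h
  · exact h3 a c b hac hcb h (by linarith)
  obtain ⟨s, hs1, hs2⟩ := exists_between h
  obtain ⟨x, ⟨hx1, hx2⟩, hx⟩ := intermediate_value_Ioo hac.le hf.continuousOn ⟨hs1, hs2⟩
  obtain ⟨y, ⟨hy1, hy2⟩, hy⟩ := intermediate_value_Ioo' hcb.le hf.continuousOn ⟨hab ▸ hs1, hs2⟩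
  obtain ⟨d, hd1, hd2⟩ := ((eventually_gt_atTop b).and (ht.eventually_gt_atTop s)).exists
  obtain ⟨z, ⟨hz1, hz2⟩, hz⟩ := intermediate_value_Ioo hd1.le hf.continuousOn ⟨hab ▸ hs1, hd2⟩
  exact h3 x y z (by linarith) (by linarith) (by rw [hx, hy]) (by rw [hy, hz])

theorem l2 (f : ℝ → ℝ) (hf : Continuous f) (ht : Tendsto f atTop atTop)
    (hb : Tendsto f atBot atBot) (h3 : No3 f) (a b : ℝ) (hab : a < b) : f a ≠ f b := by
  intro h
  obtain ⟨c, hac, hcb⟩ := exists_between hab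
  have h1 := l1 f hf ht h3 a b c hac hcb h
  have h2 := l1 (fun x => - f (-x)) (by fun_prop)
    (tendsto_neg_atBot_atTop.comp (hb.comp tendsto_neg_atTop_atBot))
    (fun x y z hxy hyz e1 e2 => h3 (-z) (-y) (-x) (by linarith) (by linarith) (by linarith)
      (by linarith)) (-b) (-a) (-c) (by linarith) (by linarith) (by simp [h])
  simp at h2
  linarith

theorem No3.neg {f : ℝ → ℝ} (h : No3 f) : No3 (fun x => - f x) :=
  fun x y z a b c d => h x y z a b (by linarith) (by linarith)

section
variable {E : Type*} [NormedAddCommGroup E] [NormedSpace ℝ E]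

theorem endsign (g : E × ℝ → ℝ) (hp : IsProperMap (fun p : E × ℝ => (p.1, g p))) :
    (∀ e, Tendsto (fun t => g (e, t)) atTop atTop) ∨
    (∀ e, Tendsto (fun t => g (e, t)) atTop atBot) := by
  have hg : Continuous g := continuous_snd.comp hp.continuous
  have bd : ∀ K : Set E, IsCompact K → ∀ M : ℝ, ∃ R : ℝ, ∀ e ∈ K, ∀ t > R, M < |g (e, t)| := by
    intro K hK M
    have hc := hp.isCompact_preimage (hK.prod (isCompact_Icc (a := -M) (b := M)))
    obtain ⟨R, hR⟩ := (hc.image continuous_snd).bddAbove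
    refine ⟨R, fun e he t ht => ?_⟩
    by_contra! h
    have : t ≤ R := hR ⟨(e, t), ⟨he, abs_le.1 h⟩, rfl⟩
    linarith
  have key : ∀ e₀ e₁ : E, ∃ R : ℝ, (∀ e ∈ segment ℝ e₀ e₁, ∀ t > R, 0 < g (e, t)) ∨
      (∀ e ∈ segment ℝ e₀ e₁, ∀ t > R, g (e, t) < 0) := by
    intro e₀ e₁
    have hK : IsCompact (segment ℝ e₀ e₁) := by
      rw [segment_eq_image_lineMap]
      exact isCompact_Icc.image AffineMap.lineMap_continuous
    obtain ⟨R, hR⟩ := bd _ hK 0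
    refine ⟨R, ?_⟩
    have hpc : IsPreconnected ((fun p => g p) '' (segment ℝ e₀ e₁ ×ˢ Ioi R)) :=
      (((convex_segment e₀ e₁).prod (convex_Ioi R)).isPreconnected).image _ hg.continuousOn
    by_contra! h
    obtain ⟨⟨e, he, t, ht, h1⟩, ⟨e', he', t', ht', h2⟩⟩ := h
    obtain ⟨p, hp1, hp2⟩ := hpc.ordConnected.out ⟨(e, t), ⟨he, ht⟩, rfl⟩ ⟨(e', t'), ⟨he', ht'⟩, rfl⟩ ⟨h1, h2⟩
    have := hR p.1 hp1.1 p.2 hp1.2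
    simp at this
    exact this hp2
  have abst : ∀ e, Tendsto (fun t => |g (e, t)|) atTop atTop := by
    intro e
    refine tendsto_atTop.2 fun M => ?_
    obtain ⟨R, hR⟩ := bd {e} isCompact_singleton M
    filter_upwards [eventually_gt_atTop R] with t ht
    exact (hR e rfl t ht).le
  have pos : ∀ e, (∃ R : ℝ, ∀ t > R, 0 < g (e, t)) → Tendsto (fun t => g (e, t)) atTop atTop := by
    rintro e ⟨R, hR⟩
    refine (abst e).congr' ?_
    filter_upwards [eventually_gt_atTop R] with t ht
    exact abs_of_pos (hR t ht)
  have ngt : ∀ e, (∃ R : ℝ, ∀ t > R, g (e, t) < 0) → Tendsto (fun t => g (e, t)) atTop atBot := by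
    rintro e ⟨R, hR⟩
    refine (tendsto_neg_atTop_atBot.comp (abst e)).congr' ?_
    filter_upwards [eventually_gt_atTop R] with t ht
    simp [abs_of_neg (hR t ht)]
  obtain ⟨R, h | h⟩ := key 0 0
  · left
    intro e
    obtain ⟨R', h' | h'⟩ := key 0 e
    · exact pos e ⟨R', h' e (right_mem_segment ..)⟩
    · have a := h 0 (left_mem_segment ..) (max R R' + 1) (by linarith [le_max_left R R'])
      have b := h' 0 (left_mem_segment ..) (max R R' + 1) (by linarith [le_max_right R R'])
      linarith
  · right
    intro e
    obtain ⟨R', h' | h'⟩ := key 0 e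
    · have a := h 0 (left_mem_segment ..) (max R R' + 1) (by linarith [le_max_left R R'])
      have b := h' 0 (left_mem_segment ..) (max R R' + 1) (by linarith [le_max_right R R'])
      linarith
    · exact ngt e ⟨R', h' e (right_mem_segment ..)⟩

theorem endsign' (g : E × ℝ → ℝ) (hp : IsProperMap (fun p : E × ℝ => (p.1, g p))) :
    (∀ e, Tendsto (fun t => g (e, t)) atBot atTop) ∨
    (∀ e, Tendsto (fun t => g (e, t)) atBot atBot) := by
  have h := endsign (fun p => g (p.1, -p.2))
    (hp.comp (((Homeomorph.refl E).prodCongr (Homeomorph.neg ℝ)).isProperMap))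
  refine h.imp (fun h e => ?_) (fun h e => ?_)
  · simpa [Function.comp_def] using (h e).comp tendsto_neg_atBot_atTop
  · simpa [Function.comp_def] using (h e).comp tendsto_neg_atBot_atTop

theorem core (g : E × ℝ → ℝ) (hp : IsProperMap (fun p : E × ℝ => (p.1, g p)))
    (ht : ∀ e, Tendsto (fun t => g (e, t)) atTop atTop)
    (hb : ∀ e, Tendsto (fun t => g (e, t)) atBot atTop)
    (h3 : ∀ e, No3 (fun t => g (e, t))) :
    ∃ τ : E → ℝ, Continuous τ ∧ ∀ e s,
      (τ e < s → ∃ x y, x ≠ y ∧ g (e, x) = s ∧ g (e, y) = s ∧ ∀ z, g (e, z) = s → z = x ∨ z = y) ∧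
      (s = τ e → ∃! x, g (e, x) = s) ∧
      (s < τ e → ¬ ∃ x, g (e, x) = s) := by
  have hg : Continuous g := continuous_snd.comp hp.continuous
  have hge : ∀ e, Continuous fun t => g (e, t) := fun e => by fun_prop
  have hmin : ∀ e, ∃ m, ∀ t, g (e, m) ≤ g (e, t) := fun e =>
    (hge e).exists_forall_le (by
      rw [cocompact_eq_atBot_atTop]; exact tendsto_sup.2 ⟨hb e, ht e⟩)
  choose m hm using hmin
  have two : ∀ e s, g (e, m e) < s → ∃ x y, x < m e ∧ m e < y ∧ g (e, x) = s ∧ g (e, y) = s := by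
    intro e s hs
    obtain ⟨d, hd1, hd2⟩ :=
      ((eventually_gt_atTop (m e)).and ((ht e).eventually_gt_atTop s)).exists
    obtain ⟨y, ⟨hy1, _⟩, hy⟩ := intermediate_value_Ioo hd1.le (hge e).continuousOn ⟨hs, hd2⟩
    obtain ⟨c, hc1, hc2⟩ :=
      ((eventually_lt_atBot (m e)).and ((hb e).eventually_gt_atTop s)).exists
    obtain ⟨x, ⟨_, hx1⟩, hx⟩ := intermediate_value_Ioo' hc1.le (hge e).continuousOn ⟨hs, hc2⟩
    exact ⟨x, y, hx1, hy1, hx, hy⟩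
  have uniq : ∀ e a b, a < b → g (e, a) = g (e, m e) → g (e, b) = g (e, m e) → False := by
    intro e a b hab ha hb
    obtain ⟨c, hac, hcb⟩ := exists_between hab
    have := l1 _ (hge e) (ht e) (h3 e) a b c hac hcb (ha.trans hb.symm)
    have := hm e c
    linarith
  refine ⟨fun e => g (e, m e), ?_, fun e s => ⟨fun hs => ?_, fun hs => ?_, fun hs => ?_⟩⟩
  · rw [continuous_iff_lower_upperSemicontinuous]
    constructor
    · rw [lowerSemicontinuous_iff_isClosed_preimage]
      intro s
      have : (fun e => g (e, m e)) ⁻¹' Iic s =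
          (fun e => (e, s)) ⁻¹' (range fun p : E × ℝ => (p.1, g p)) := by
        ext e
        simp only [mem_preimage, mem_Iic, mem_range, Prod.mk.injEq, Prod.exists]
        constructor
        · intro h
          rcases h.eq_or_lt with h | h
          · exact ⟨e, m e, rfl, h⟩
          · obtain ⟨x, y, _, _, hx, _⟩ := two e s h
            exact ⟨e, x, rfl, hx⟩
        · rintro ⟨e', t, rfl, rfl⟩
          exact hm e' t
      rw [this]
      exact hp.isClosedMap.isClosed_range.preimage (by fun_prop)
    · rw [upperSemicontinuous_iff_isOpen_preimage]
      intro s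
      have : (fun e => g (e, m e)) ⁻¹' Iio s = ⋃ t, (fun e => g (e, t)) ⁻¹' Iio s := by
        ext e
        simp only [mem_preimage, mem_Iio, mem_iUnion]
        exact ⟨fun h => ⟨_, h⟩, fun ⟨t, h⟩ => (hm e t).trans_lt h⟩
      rw [this]
      exact isOpen_iUnion fun t => isOpen_Iio.preimage (by fun_prop)
  · obtain ⟨x, y, hx1, hy1, hx, hy⟩ := two e s hs
    refine ⟨x, y, (hx1.trans hy1).ne, hx, hy, fun z hz => ?_⟩
    by_contra! h
    rcases lt_or_gt_of_ne h.1 with h1 | h1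
    · exact h3 e z x y h1 (hx1.trans hy1) (hz.trans hx.symm) (hx.trans hy.symm)
    · rcases lt_or_gt_of_ne h.2 with h2 | h2
      · exact h3 e x z y h1 h2 (hx.trans hz.symm) (hz.trans hy.symm)
      · exact h3 e x y z (hx1.trans hy1) h2 (hx.trans hy.symm) (hy.trans hz.symm)
  · subst hs
    refine ⟨m e, rfl, fun y hy => ?_⟩
    by_contra h
    rcases lt_or_gt_of_ne h with h | h
    · exact uniq e _ _ h hy rfl
    · exact uniq e _ _ h rfl hy
  · rintro ⟨x, rfl⟩
    exact absurd (hm e x) (not_le.2 hs)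

end


/-- Exact multiplicity for a proper fiber-preserving continuous map `G (e,t) = (e, g (e,t))`
on `E × ℝ` (`E` a real Banach space) such that no point has three distinct preimages and
some point has two distinct preimages: there are a continuous `τ : E → ℝ` and a sign
`ε ∈ {+1, -1}` such that `G x = (e, s)` has exactly two solutions if `ε (s - τ e) < 0`,
exactly one if `s = τ e`, and none if `ε (s - τ e) > 0`. -/
theorem stmt11 {E : Type*} [NormedAddCommGroup E] [NormedSpace ℝ E] [CompleteSpace E]
    (g : E × ℝ → ℝ) (hg : Continuous g)
    (G : E × ℝ → E × ℝ) (hG : ∀ p : E × ℝ, G p = (p.1, g p))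
    (hproper : ∀ K : Set (E × ℝ), IsCompact K → IsCompact (G ⁻¹' K))
    (hno3 : ∀ p q r : E × ℝ, G p = G q → G q = G r → p = q ∨ q = r ∨ p = r)
    (h2 : ∃ p q : E × ℝ, p ≠ q ∧ G p = G q) :
    ∃ (τ : E → ℝ) (ε : ℝ), Continuous τ ∧ (ε = 1 ∨ ε = -1) ∧
      ∀ (e : E) (s : ℝ),
        (ε * (s - τ e) < 0 →
          ∃ x y : E × ℝ, x ≠ y ∧ G x = (e, s) ∧ G y = (e, s) ∧
            ∀ z : E × ℝ, G z = (e, s) → z = x ∨ z = y) ∧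
        (s = τ e → ∃! x : E × ℝ, G x = (e, s)) ∧
        (0 < ε * (s - τ e) → ¬ ∃ x : E × ℝ, G x = (e, s)) := by
  have hGe : G = fun p => (p.1, g p) := funext hG
  subst hGe
  have hp : IsProperMap (fun p : E × ℝ => (p.1, g p)) :=
    isProperMap_iff_isCompact_preimage.2 ⟨by fun_prop, fun {K} hK => hproper K hK⟩
  have hp' : IsProperMap (fun p : E × ℝ => (p.1, - g p)) :=
    (((Homeomorph.refl E).prodCongr (Homeomorph.neg ℝ)).isProperMap).comp hp
  have h3 : ∀ e, No3 (fun t => g (e, t)) := by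
    intro e x y z hxy hyz h1 h2
    have := hno3 (e, x) (e, y) (e, z) (by simpa using h1) (by simpa using h2)
    simp only [Prod.mk.injEq, true_and] at this
    rcases this with h | h | h <;> linarith
  have hge : ∀ e, Continuous fun t => g (e, t) := fun e => by fun_prop
  have h2' : ∃ e a b, a < b ∧ g (e, a) = g (e, b) := by
    obtain ⟨⟨e, a⟩, ⟨e', b⟩, hne, h⟩ := h2
    simp only [Prod.mk.injEq] at h
    obtain ⟨rfl, h⟩ := h
    rcases lt_or_gt_of_ne (fun hab : a = b => hne (by rw [hab])) with hab | hab
    · exact ⟨e, a, b, hab, h⟩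
    · exact ⟨e, b, a, hab, h.symm⟩
  obtain ⟨e₀, a, b, hab, hgab⟩ := h2'
  have fin : ∀ (e : E) (s : ℝ),
      ((∃ x y, x ≠ y ∧ g (e, x) = s ∧ g (e, y) = s ∧ ∀ z, g (e, z) = s → z = x ∨ z = y) →
        ∃ x y : E × ℝ, x ≠ y ∧ (x.1, g x) = (e, s) ∧ (y.1, g y) = (e, s) ∧
            ∀ z : E × ℝ, (z.1, g z) = (e, s) → z = x ∨ z = y) ∧
      ((∃! x, g (e, x) = s) → ∃! x : E × ℝ, (x.1, g x) = (e, s)) ∧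
      ((¬ ∃ x, g (e, x) = s) → ¬ ∃ x : E × ℝ, (x.1, g x) = (e, s)) := by
    intro e s
    refine ⟨?_, ?_, ?_⟩
    · rintro ⟨x, y, hxy, hx, hy, h⟩
      refine ⟨(e, x), (e, y), by simpa using hxy, by simpa using hx, by simpa using hy, ?_⟩
      rintro ⟨e', z⟩ hz
      simp only [Prod.mk.injEq] at hz ⊢
      obtain ⟨rfl, hz⟩ := hz
      simpa using h z hz
    · rintro ⟨x, hx, h⟩
      refine ⟨(e, x), by simpa using hx, ?_⟩
      rintro ⟨e', z⟩ hz
      simp only [Prod.mk.injEq] at hz ⊢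
      obtain ⟨rfl, hz⟩ := hz
      exact ⟨rfl, h z hz⟩
    · rintro h ⟨⟨e', z⟩, hz⟩
      simp only [Prod.mk.injEq] at hz
      obtain ⟨rfl, hz⟩ := hz
      exact h ⟨z, hz⟩
  rcases endsign g hp with ht | ht <;> rcases endsign' g hp with hb | hb
  · obtain ⟨τ, hτ, h⟩ := core g hp ht hb h3
    refine ⟨τ, -1, hτ, Or.inr rfl, fun e s => ?_⟩
    obtain ⟨f1, f2, f3⟩ := fin e s
    obtain ⟨k1, k2, k3⟩ := h e s
    exact ⟨fun hs => f1 (k1 (by linarith)), fun hs => f2 (k2 hs), fun hs => f3 (k3 (by linarith))⟩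
  · exact absurd hgab (l2 _ (hge e₀) (ht e₀) (hb e₀) (h3 e₀) a b hab)
  · exact absurd (congrArg Neg.neg hgab) (l2 (fun t => - g (e₀, t)) (hge e₀).neg
      (tendsto_neg_atBot_atTop.comp (ht e₀)) (tendsto_neg_atTop_atBot.comp (hb e₀))
      (h3 e₀).neg a b hab)
  · obtain ⟨τ, hτ, h⟩ := core (fun p => - g p) hp'
      (fun e => tendsto_neg_atBot_atTop.comp (ht e))
      (fun e => tendsto_neg_atBot_atTop.comp (hb e)) (fun e => (h3 e).neg)
    refine ⟨fun e => - τ e, 1, hτ.neg, Or.inl rfl, fun e s => ?_⟩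
    obtain ⟨f1, f2, f3⟩ := fin e s
    obtain ⟨k1, k2, k3⟩ := h e (-s)
    simp only [neg_inj] at k1 k2 k3
    exact ⟨fun hs => f1 (k1 (by linarith)), fun hs => f2 (k2 (by linarith)),
      fun hs => f3 (k3 (by linarith))⟩
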